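/- arXiv:2311.05040 — 6 statements merged into one kernel-verified Lean document; each statement's English description precedes it below -/
import Mathlib

section
/- Let q* be a feasible charge vector that minimizes the cost ∑_{n=1}^m c_n q_n among all feasible charge vectors, and suppose q*_n > 0 for every n ∈ {1,…,m}. Then for every n ∈ {1,…,m}: if c_n > c_{n+1}, then q*_n = β_{n+1} + d_n − b_n(q*) (the vehicle charges exactly enough to arrive at node n+1 with battery level β_{n+1}); and if c_n < c_{n+1}, then q*_n = B_n − b_n(q*) (the vehicle charges to the maximum allowable level B_n at station n). -/
/-!
The proof is an exchange argument. Moving an amount `t` (of either sign) of charge from station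
`n + 1` to station `n` changes the arrival level at node `n + 1` only, by `t`, and the departure
level at station `n` only, by `t` (`batt_shiftCharge`); the cost changes by
`t * (c n - c (n + 1))` (`chargeCost_shiftCharge`). If `c (n + 1) < c n` and the vehicle arrives at
node `n + 1` strictly above `β (n + 1)`, a small negative `t` is feasible and lowers the cost; if
`c n < c (n + 1)` and it leaves station `n` strictly below `B n`, a small positive `t` does.

For `n = m` the entry `m + 1` of a charge vector is never read by `FeasibleCharge` or `chargeCost`,
so, with `c (m + 1) = 0`, the same formulas cover the last station.
-/

/-- Arrival battery level at node `i`: `b_i(q) = L + ∑_{k=1}^{i-1} q_k - ∑_{k=0}^{i-1} d_k`. -/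
noncomputable def batt (L : ℝ) (d q : ℕ → ℝ) (i : ℕ) : ℝ :=
  L + ∑ k ∈ Finset.Ico 1 i, q k - ∑ k ∈ Finset.range i, d k

/-- Feasibility of a charge vector for a single-path charging instance. -/
def FeasibleCharge (m : ℕ) (L : ℝ) (d β B q : ℕ → ℝ) : Prop :=
  (∀ n ∈ Finset.Icc 1 m, 0 ≤ q n) ∧
  (∀ i ∈ Finset.Icc 1 (m + 1), β i ≤ batt L d q i) ∧
  (∀ n ∈ Finset.Icc 1 m, batt L d q n + q n ≤ B n)

/-- Cost of a charge vector. -/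
noncomputable def chargeCost (m : ℕ) (c q : ℕ → ℝ) : ℝ :=
  ∑ n ∈ Finset.Icc 1 m, c n * q n

/-- The charge vector `q` with an amount `t` moved from station `n + 1` to station `n`. -/
noncomputable def shiftCharge (q : ℕ → ℝ) (n : ℕ) (t : ℝ) (k : ℕ) : ℝ :=
  q k + (if k = n then t else 0) - (if k = n + 1 then t else 0)

lemma batt_shiftCharge (L : ℝ) (d q : ℕ → ℝ) {n : ℕ} (hn : 1 ≤ n) (t : ℝ) (i : ℕ) :
    batt L d (shiftCharge q n t) i = batt L d q i + if i = n + 1 then t else 0 := by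
  simp only [batt, shiftCharge, Finset.sum_sub_distrib, Finset.sum_add_distrib,
    Finset.sum_ite_eq', Finset.mem_Ico]
  split_ifs <;> first | omega | ring

lemma chargeCost_shiftCharge {m : ℕ} {c : ℕ → ℝ} (hcconv : c (m + 1) = 0) (q : ℕ → ℝ) {n : ℕ}
    (hn : n ∈ Finset.Icc 1 m) (t : ℝ) :
    chargeCost m c (shiftCharge q n t) = chargeCost m c q + t * (c n - c (n + 1)) := by
  rw [Finset.mem_Icc] at hn
  simp only [chargeCost, shiftCharge, mul_sub, mul_add, mul_ite, mul_zero,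
    Finset.sum_sub_distrib, Finset.sum_add_distrib, Finset.sum_ite_eq', Finset.mem_Icc]
  rw [if_pos hn]
  split_ifs with h
  · ring
  · obtain rfl : n = m := by omega
    rw [hcconv]
    ring

/-- Only four constraints can be violated by shifting charge between consecutive stations. -/
lemma feasible_shiftCharge {m : ℕ} {L : ℝ} {d β B q : ℕ → ℝ} (hfeas : FeasibleCharge m L d β B q)
    {n : ℕ} (hn : n ∈ Finset.Icc 1 m) {t : ℝ}
    (hq : 0 ≤ q n + t) (hq' : n + 1 ≤ m → t ≤ q (n + 1))
    (hβ : β (n + 1) ≤ batt L d q (n + 1) + t) (hB : batt L d q n + q n + t ≤ B n) :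
    FeasibleCharge m L d β B (shiftCharge q n t) := by
  obtain ⟨h1, h2, h3⟩ := hfeas
  have hn1 := (Finset.mem_Icc.mp hn).1
  refine ⟨fun k hk => ?_, fun i hi => ?_, fun k hk => ?_⟩
  · have := h1 k hk
    rcases eq_or_ne k n with rfl | hkn
    · simpa [shiftCharge] using hq
    rcases eq_or_ne k (n + 1) with rfl | hkn'
    · simpa [shiftCharge] using hq' (Finset.mem_Icc.mp hk).2
    · simpa [shiftCharge, hkn, hkn'] using this
  · have := h2 i hi
    rw [batt_shiftCharge L d q hn1]
    split_ifs with h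
    · subst h
      exact hβ
    · simpa using this
  · have := h3 k hk
    rw [batt_shiftCharge L d q hn1]
    rcases eq_or_ne k n with rfl | hkn
    · simpa [shiftCharge, add_assoc] using hB
    rcases eq_or_ne k (n + 1) with rfl | hkn'
    · simpa [shiftCharge] using this
    · simpa [shiftCharge, hkn, hkn'] using this

lemma batt_succ (L : ℝ) (d q : ℕ → ℝ) {n : ℕ} (hn : 1 ≤ n) :
    batt L d q (n + 1) = batt L d q n + q n - d n := by
  simp only [batt, Finset.sum_Ico_succ_top hn, Finset.sum_range_succ]
  ring

theorem optimal_charge_structure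
    (m : ℕ) (hm : 1 ≤ m) (L : ℝ) (hL : 0 < L)
    (d c β B : ℕ → ℝ)
    (hd : ∀ n ≤ m, 0 ≤ d n)
    (hc : ∀ n ∈ Finset.Icc 1 m, 0 < c n)
    (hthr : ∀ n ∈ Finset.Icc 1 m, 0 ≤ β n ∧ β n < B n ∧ B n ≤ L)
    (hβconv : β (m + 1) = 0) (hcconv : c (m + 1) = 0)
    (q : ℕ → ℝ)
    (hfeas : FeasibleCharge m L d β B q)
    (hopt : ∀ q', FeasibleCharge m L d β B q' → chargeCost m c q ≤ chargeCost m c q')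
    (hpos : ∀ n ∈ Finset.Icc 1 m, 0 < q n) :
    ∀ n ∈ Finset.Icc 1 m,
      (c (n + 1) < c n → q n = β (n + 1) + d n - batt L d q n) ∧
      (c n < c (n + 1) → q n = B n - batt L d q n) := by
  intro n hn
  obtain ⟨hn1, hnm⟩ := Finset.mem_Icc.mp hn
  have hqn := hpos n hn
  have hβn := hfeas.2.1 (n + 1) (Finset.mem_Icc.mpr ⟨by omega, by omega⟩)
  have hBn := hfeas.2.2 n hn
  have hsucc := batt_succ L d q hn1
  refine ⟨fun hlt => ?_, fun hlt => ?_⟩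
  · by_contra hne
    have hslack : 0 < batt L d q (n + 1) - β (n + 1) := by
      refine lt_of_le_of_ne (by linarith) fun h => hne ?_
      linarith
    -- Charge `s` less at station `n`, as far as `q n` and the slack at node `n + 1` allow.
    obtain ⟨s, hs, hs1, hs2⟩ :
        ∃ s, 0 < s ∧ s ≤ q n ∧ s ≤ batt L d q (n + 1) - β (n + 1) :=
      ⟨_, lt_min hqn hslack, min_le_left _ _, min_le_right _ _⟩
    have hle := hopt _ (feasible_shiftCharge hfeas hn (t := -s) (by linarith)
      (fun h => by
        have := hpos (n + 1) (Finset.mem_Icc.mpr ⟨by omega, h⟩)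
        linarith)
      (by linarith) (by linarith))
    rw [chargeCost_shiftCharge hcconv q hn] at hle
    nlinarith [mul_pos hs (sub_pos.mpr hlt)]
  · by_contra hne
    have hslack : 0 < B n - batt L d q n - q n := by
      refine lt_of_le_of_ne (by linarith) fun h => hne ?_
      linarith
    -- `c m < c (m + 1) = 0` is impossible, so node `n + 1` is a station.
    have hnm' : n + 1 ≤ m := by
      by_contra h
      obtain rfl : n = m := by omega
      linarith [hc n hn]
    have hqn' := hpos (n + 1) (Finset.mem_Icc.mpr ⟨by omega, hnm'⟩)
    obtain ⟨s, hs, hs1, hs2⟩ :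
        ∃ s, 0 < s ∧ s ≤ q (n + 1) ∧ s ≤ B n - batt L d q n - q n :=
      ⟨_, lt_min hqn' hslack, min_le_left _ _, min_le_right _ _⟩
    have hle := hopt _ (feasible_shiftCharge hfeas hn (t := s) (by linarith)
      (fun _ => hs1) (by linarith) (by linarith))
    rw [chargeCost_shiftCharge hcconv q hn] at hle
    nlinarith [mul_pos hs (sub_pos.mpr hlt)]
end

section
/- Let q be a feasible charge vector and let n ∈ {1,…,m} be such that c_n > c_{n+1}, q_n > 0, and b_{n+1}(q) > β_{n+1}. Then there exists a feasible charge vector q′ whose cost ∑_{k=1}^m c_k q′_k is strictly smaller than ∑_{k=1}^m c_k q_k. (Concretely, for sufficiently small ε > 0, decreasing q_n by ε and, when n ≤ m−1, increasing q_{n+1} by ε yields such a q′.) -/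
/-- The charge vector `q` with the amount `ε` moved from station `n` to station `n + 1`. -/
noncomputable def postpone (q : ℕ → ℝ) (n : ℕ) (ε : ℝ) (k : ℕ) : ℝ :=
  q k - (if k = n then ε else 0) + (if k = n + 1 then ε else 0)

lemma batt_postpone (L : ℝ) (d q : ℕ → ℝ) (n : ℕ) (hn : 1 ≤ n) (ε : ℝ) (i : ℕ) :
    batt L d (postpone q n ε) i = batt L d q i - (if i = n + 1 then ε else 0) := by
  simp only [batt, postpone, Finset.sum_add_distrib, Finset.sum_sub_distrib,
    Finset.sum_ite_eq', Finset.mem_Ico]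
  split_ifs <;> first | omega | ring

lemma chargeCost_postpone (m : ℕ) (c q : ℕ → ℝ) (n : ℕ) (hn : n ∈ Finset.Icc 1 m) (ε : ℝ) :
    chargeCost m c (postpone q n ε) =
      chargeCost m c q - c n * ε + (if n + 1 ≤ m then c (n + 1) * ε else 0) := by
  simp only [chargeCost, postpone, mul_add, mul_sub, mul_ite, mul_zero, Finset.sum_add_distrib,
    Finset.sum_sub_distrib, Finset.sum_ite_eq', if_pos hn]
  simp

theorem improve_when_next_cheaper
    (m : ℕ) (hm : 1 ≤ m) (L : ℝ) (hL : 0 < L)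
    (d c β B : ℕ → ℝ)
    (hd : ∀ n ≤ m, 0 ≤ d n)
    (hc : ∀ n ∈ Finset.Icc 1 m, 0 < c n)
    (hthr : ∀ n ∈ Finset.Icc 1 m, 0 ≤ β n ∧ β n < B n ∧ B n ≤ L)
    (hβconv : β (m + 1) = 0) (hcconv : c (m + 1) = 0)
    (q : ℕ → ℝ)
    (hfeas : FeasibleCharge m L d β B q)
    (n : ℕ) (hn : n ∈ Finset.Icc 1 m)
    (hcn : c (n + 1) < c n)
    (hqn : 0 < q n)
    (hb : β (n + 1) < batt L d q (n + 1)) :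
    ∃ q', FeasibleCharge m L d β B q' ∧ chargeCost m c q' < chargeCost m c q := by
  obtain ⟨hq, hβ, hB⟩ := hfeas
  obtain ⟨ε, hε, hεq, hεb⟩ :
      ∃ ε : ℝ, 0 < ε ∧ ε ≤ q n ∧ ε ≤ batt L d q (n + 1) - β (n + 1) :=
    ⟨min (q n) (batt L d q (n + 1) - β (n + 1)), lt_min hqn (sub_pos.2 hb),
      min_le_left _ _, min_le_right _ _⟩
  have hn1 : 1 ≤ n := (Finset.mem_Icc.1 hn).1
  refine ⟨postpone q n ε, ⟨fun k hk => ?_, fun i hi => ?_, fun k hk => ?_⟩, ?_⟩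
  · have := hq k hk
    unfold postpone
    split_ifs with h1 h2 h2
    · omega
    · subst h1; linarith
    · linarith
    · linarith
  · have := hβ i hi
    rw [batt_postpone L d q n hn1]
    split_ifs with h
    · subst h; linarith
    · linarith
  · have := hB k hk
    rw [batt_postpone L d q n hn1]
    unfold postpone
    split_ifs <;> linarith
  · rw [chargeCost_postpone m c q n hn]
    split_ifs
    · nlinarith
    · nlinarith [hc n hn]
end

section
/- The supremum of the value of x over all feasible EV flows (x, z) equals the supremum of the value of x over all feasible EV flows (x, z) in which every pair (P, q) in the support of x has q an extreme point of Q_P. (This is the reduction of the semi-infinite maximum EV flow problem P_max-flow to the finite linear program P′_max-flow supported on extreme-point charging strategies.) -/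
/-!
The two sets of attainable values coincide, so their suprema do. Every charging vector `q ∈ Q P` is
a finite convex combination of extreme points of `Q P` (Minkowski's finite-dimensional sharpening of
the Krein–Milman theorem, `IsCompact.subset_convexHull_extremePoints`, with no closure needed).
Splitting the weight `x(P, q)` according to such a combination changes neither the load
`∑ x(P, q) q` nor the value `∑ x(P, q)`, so the same `z` remains feasible.

Minkowski's theorem is proved by induction on the dimension. Let `C` be the convex hull of the
extreme points of `s`; by Krein–Milman `C` is dense in `s`. A point `x ∈ s` in the interior of `C`
needs no argument. Otherwise `exists_supporting_functional` gives a nonzero `f` with `f ≤ f x` on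
`C`, hence on `s`, and the induction hypothesis applies to the face `s ∩ {f = f x}`, viewed as a
subset of `ker f`; extreme points of this face are extreme in `s`.
-/

/-- A point in the closure of a convex set but not in its interior has a nonzero supporting
functional, even when the interior is empty. -/
lemma exists_supporting_functional {E : Type*} [NormedAddCommGroup E] [NormedSpace ℝ E]
    [FiniteDimensional ℝ E] {C : Set E} (hC : Convex ℝ C) {x : E} (hx : x ∈ closure C)
    (hxi : x ∉ interior C) :
    ∃ f : StrongDual ℝ E, f ≠ 0 ∧ ∀ y ∈ closure C, f y ≤ f x := by
  suffices h : ∃ f : StrongDual ℝ E, f ≠ 0 ∧ ∀ y ∈ C, f y ≤ f x by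
    obtain ⟨f, hf, h⟩ := h
    exact ⟨f, hf, fun y hy =>
      closure_minimal (t := {y | f y ≤ f x}) h (isClosed_le f.continuous continuous_const) hy⟩
  by_cases hne : (interior C).Nonempty
  · exact geometric_hahn_banach_of_nonempty_interior_point hC hxi hne
  · -- `C` lies in a proper affine subspace, on which some nonzero functional is constant.
    obtain ⟨c, hc⟩ : C.Nonempty := closure_nonempty_iff.1 ⟨x, hx⟩
    rw [hC.interior_nonempty_iff_affineSpan_eq_top,
      AffineSubspace.affineSpan_eq_top_iff_vectorSpan_eq_top_of_nonempty ℝ E E ⟨c, hc⟩] at hne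
    obtain ⟨g, hg0, hg⟩ := Submodule.exists_le_ker_of_lt_top _ (lt_top_iff_ne_top.2 hne)
    have hconst : ∀ y ∈ C, g y = g c := fun y hy => by
      have : g (y - c) = 0 := hg (vsub_mem_vectorSpan ℝ hy hc)
      rwa [map_sub, sub_eq_zero] at this
    let f : StrongDual ℝ E := LinearMap.toContinuousLinearMap g
    have hfx : f x = f c :=
      closure_minimal (t := {y | f y = f c}) hconst
        (isClosed_eq f.continuous continuous_const) hx
    refine ⟨f, fun h => hg0 ?_, fun y hy => ?_⟩
    · ext y
      exact DFunLike.congr_fun h y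
    · rw [hfx]
      exact (hconst y hy).le

/-- **Minkowski's theorem**: in finite dimension, every point of a compact convex set is a convex
combination of extreme points. -/
theorem IsCompact.subset_convexHull_extremePoints {E : Type*} [NormedAddCommGroup E]
    [NormedSpace ℝ E] [FiniteDimensional ℝ E] {s : Set E} (hs : IsCompact s)
    (hconv : Convex ℝ s) : s ⊆ convexHull ℝ (s.extremePoints ℝ) := by
  induction hn : Module.finrank ℝ E using Nat.strong_induction_on generalizing E with
  | _ n ih =>
  intro x hx
  have hcl := closure_convexHull_extremePoints hs hconv
  by_cases hxi : x ∈ interior (convexHull ℝ (s.extremePoints ℝ))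
  · exact interior_subset hxi
  obtain ⟨f, hf0, hf⟩ :=
    exists_supporting_functional (convex_convexHull ℝ _) (hcl.symm ▸ hx) hxi
  rw [hcl] at hf
  have hf0' : (f : E →ₗ[ℝ] ℝ) ≠ 0 := fun h => hf0 (by ext y; exact DFunLike.congr_fun h y)
  let K : Submodule ℝ E := LinearMap.ker (f : E →ₗ[ℝ] ℝ)
  let φ : K →ᵃ[ℝ] E := K.subtype.toAffineMap + AffineMap.const ℝ K x
  have hφ : ∀ k : K, φ k = k + x := fun k => rfl
  have hfφ : ∀ k : K, f (φ k) = f x := fun k => by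
    have : f k = 0 := k.2
    rw [hφ, map_add, this, zero_add]
  -- Every point of the hyperplane `{f = f x}` is in the image of `φ`.
  have hsurj : ∀ y, f y = f x → ∃ k : K, φ k = y := fun y hy =>
    ⟨⟨y - x, show f (y - x) = 0 by rw [map_sub, hy, sub_self]⟩, by simp [hφ]⟩
  have hemb : Topology.IsClosedEmbedding φ :=
    (Homeomorph.addRight x).isClosedEmbedding.comp
      (K.closed_of_finiteDimensional.isClosedEmbedding_subtypeVal)
  have hlt : Module.finrank ℝ K < n := by
    have : Module.finrank ℝ K + 1 = Module.finrank ℝ E :=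
      Module.Dual.finrank_ker_add_one_of_ne_zero hf0'
    omega
  have h0 : (0 : K) ∈ convexHull ℝ ((φ ⁻¹' s).extremePoints ℝ) :=
    ih _ hlt (hemb.isCompact_preimage hs) (hconv.affine_preimage φ) rfl
      (by simpa [hφ] using hx)
  have hext : φ '' ((φ ⁻¹' s).extremePoints ℝ) ⊆ s.extremePoints ℝ := by
    rintro _ ⟨k, hk, rfl⟩
    refine ⟨hk.1, fun y hy z hz hyz => ?_⟩
    -- `f` attains its maximum over `s` at `φ k`, hence at both ends of the segment.
    have hfyz : f y = f x ∧ f z = f x := by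
      obtain ⟨a, b, ha, hb, hab, h⟩ := hyz
      have h1 : a * f y + b * f z = f x := by
        rw [← hfφ k, ← h]; simp
      have hy' := hf y hy
      have hz' := hf z hz
      obtain rfl : b = 1 - a := by linarith
      constructor <;> nlinarith [mul_nonneg ha.le (sub_nonneg.2 hy'),
        mul_nonneg hb.le (sub_nonneg.2 hz')]
    obtain ⟨k₁, rfl⟩ := hsurj y hfyz.1
    obtain ⟨k₂, rfl⟩ := hsurj z hfyz.2
    rw [← image_openSegment] at hyz
    obtain ⟨k', hk', he⟩ := hyz
    obtain rfl := hemb.injective he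
    rw [hk.2 hy hz hk']
  have := Set.mem_image_of_mem φ h0
  rw [φ.image_convexHull] at this
  simpa [hφ] using convexHull_mono hext this

/-- The pairs (load vector, value) attained by nonnegative, finitely supported weights on the pairs
`(p, q)` with `q ∈ S p`, as a convex cone. -/
def flowCone {P E : Type*} [AddCommGroup E] [Module ℝ E] (S : P → Set E) :
    PointedCone ℝ (E × ℝ) where
  carrier := {u | ∃ x : (P × E) →₀ ℝ, (∀ pq, 0 ≤ x pq) ∧ (∀ pq, x pq ≠ 0 → pq.2 ∈ S pq.1) ∧
    Finsupp.linearCombination ℝ (fun pq : P × E => (pq.2, (1 : ℝ))) x = u}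
  zero_mem' := ⟨0, by simp, by simp, by simp⟩
  add_mem' := by
    rintro _ _ ⟨x, hx, hxS, rfl⟩ ⟨y, hy, hyS, rfl⟩
    refine ⟨x + y, fun pq => add_nonneg (hx pq) (hy pq), fun pq h => ?_, map_add _ _ _⟩
    by_cases h1 : x pq = 0
    · exact hyS pq fun h2 => h (by simp [h1, h2])
    · exact hxS pq h1
  smul_mem' := by
    rintro ⟨c, hc⟩ _ ⟨x, hx, hxS, rfl⟩
    exact ⟨c • x, fun pq => mul_nonneg hc (hx pq),
      fun pq h => hxS pq fun h2 => h (by simp [h2]), map_smul _ _ _⟩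

lemma mem_flowCone_of_mem_convexHull {P E : Type*} [AddCommGroup E] [Module ℝ E] {S : P → Set E}
    {p : P} {q : E} (hq : q ∈ convexHull ℝ (S p)) : (q, (1 : ℝ)) ∈ flowCone S := by
  refine convexHull_min (t := {q : E | (q, (1 : ℝ)) ∈ flowCone S}) ?_ ?_ hq
  · intro q hq
    classical
    refine ⟨Finsupp.single (p, q) 1, fun pq => ?_, fun pq h => ?_, by simp⟩
    · rw [Finsupp.single_apply]; split_ifs <;> norm_num
    · rw [Finsupp.single_apply] at h
      obtain rfl : (p, q) = pq := by by_contra h'; simp [h'] at h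
      exact hq
  · intro q₁ h₁ q₂ h₂ a b ha hb hab
    have := (flowCone S).add_mem ((flowCone S).smul_mem ha h₁)
      ((flowCone S).smul_mem hb h₂)
    have he : (a • q₁ + b • q₂, (1 : ℝ)) = a • (q₁, (1 : ℝ)) + b • (q₂, (1 : ℝ)) := by
      ext <;> simp [hab]
    show (a • q₁ + b • q₂, (1 : ℝ)) ∈ flowCone S
    rw [he]
    exact this

theorem maxFlow_extremePoint_reduction
    (I J P : Type) [Fintype I] [Fintype J] [Fintype P]
    (r : I × J → ℝ) (hr : ∀ ij, 0 < r ij)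
    (a : I → ℝ) (ha : ∀ i, 0 ≤ a i)
    (Q : P → Set (I × J → ℝ))
    (hQne : ∀ p, (Q p).Nonempty)
    (hQcomp : ∀ p, IsCompact (Q p))
    (hQconv : ∀ p, Convex ℝ (Q p))
    (hQnonneg : ∀ p, ∀ q ∈ Q p, ∀ ij, 0 ≤ q ij) :
    sSup {v : ℝ | ∃ (x : (P × (I × J → ℝ)) →₀ ℝ) (z : I × J → ℝ),
        (∀ pq, 0 ≤ x pq) ∧
        (∀ pq ∈ x.support, pq.2 ∈ Q pq.1) ∧
        (∀ ij, 0 ≤ z ij) ∧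
        (∀ ij, (x.sum fun pq w => w * pq.2 ij) ≤ r ij * z ij) ∧
        (∀ i, ∑ j, z (i, j) = a i) ∧
        v = x.sum fun _ w => w} =
    sSup {v : ℝ | ∃ (x : (P × (I × J → ℝ)) →₀ ℝ) (z : I × J → ℝ),
        (∀ pq, 0 ≤ x pq) ∧
        (∀ pq ∈ x.support, pq.2 ∈ Q pq.1) ∧
        (∀ pq ∈ x.support, pq.2 ∈ Set.extremePoints ℝ (Q pq.1)) ∧
        (∀ ij, 0 ≤ z ij) ∧
        (∀ ij, (x.sum fun pq w => w * pq.2 ij) ≤ r ij * z ij) ∧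
        (∀ i, ∑ j, z (i, j) = a i) ∧
        v = x.sum fun _ w => w} := by
  congr 1
  ext v
  constructor
  · rintro ⟨x, z, hx, hxQ, hz, hload, hcap, rfl⟩
    have hmem : Finsupp.linearCombination ℝ (fun pq : P × (I × J → ℝ) => (pq.2, (1 : ℝ))) x ∈
        flowCone fun p => (Q p).extremePoints ℝ := by
      rw [Finsupp.linearCombination_apply]
      refine Submodule.sum_mem _ fun pq hpq => ?_
      exact (flowCone _).smul_mem (hx pq) (mem_flowCone_of_mem_convexHull (p := pq.1)
        ((hQcomp pq.1).subset_convexHull_extremePoints (hQconv pq.1) (hxQ pq hpq)))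
    obtain ⟨y, hy, hyS, hyx⟩ := hmem
    have hfst : ∀ w : (P × (I × J → ℝ)) →₀ ℝ, ∀ ij, (w.sum fun pq c => c * pq.2 ij) =
        (Finsupp.linearCombination ℝ
          (fun pq : P × (I × J → ℝ) => (pq.2, (1 : ℝ))) w).1 ij := fun w ij => by
      simp [Finsupp.linearCombination_apply, Finsupp.sum, Prod.fst_sum]
    have hsnd : ∀ w : (P × (I × J → ℝ)) →₀ ℝ, (w.sum fun _ c => c) =
        (Finsupp.linearCombination ℝ
          (fun pq : P × (I × J → ℝ) => (pq.2, (1 : ℝ))) w).2 := fun w => by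
      simp [Finsupp.linearCombination_apply, Finsupp.sum, Prod.snd_sum]
    have hyS' : ∀ pq ∈ y.support, pq.2 ∈ (Q pq.1).extremePoints ℝ := fun pq h =>
      hyS pq (Finsupp.mem_support_iff.1 h)
    refine ⟨y, z, hy, fun pq h => (hyS' pq h).1, hyS', hz, fun ij => ?_, hcap, ?_⟩
    · rw [hfst, hyx, ← hfst]
      exact hload ij
    · rw [hsnd, hsnd, hyx]
  · rintro ⟨x, z, hx, hxQ, -, hz, hload, hcap, rfl⟩
    exact ⟨x, z, hx, hxQ, hz, hload, hcap, rfl⟩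
end

section
/- Suppose 𝒫 is partitioned into classes 𝒫_1, …, 𝒫_K with demands D_1, …, D_K ≥ 0, that each path P ∈ 𝒫 has a latency cost ℓ_P ≥ 0, and that each (i,j) ∈ I×J has a per-unit charging cost γ_{ij} ≥ 0; the cost of an EV flow x is C(x) = ∑_{(P,q)} x(P,q)·(ℓ_P + ∑_{(i,j)} γ_{ij} q_{ij}). Then the infimum of C(x) over all feasible EV flows (x, z) satisfying the demand constraints ∑_{(P,q): P ∈ 𝒫_k} x(P,q) ≥ D_k for all k equals the infimum of C(x) over such feasible flows in which every pair (P, q) in the support of x has q an extreme point of Q_P. (This is the reduction of the semi-infinite minimum-cost EV flow problem P_min-cost to a finite linear program supported on extreme-point charging strategies.) -/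
/-!
The two sets of attainable costs coincide, hence so do their infima. Every feasible flow can be
replaced by one supported on extreme points: each `q ∈ Q p` is a finite convex combination of
extreme points of `Q p`, so the weight of `(p, q)` may be split among the pairs `(p, e)`
accordingly. All the quantities in the constraints and the objective are weighted sums of functions
of `(p, q)` that are affine in `q`, and these sums are unchanged by the splitting
(`exists_extreme_flow`).

The convex-geometric input is Minkowski's theorem, `mem_convexHull_extremePoints`: a compact convex
set in finite dimension is the convex hull (no closure needed) of its extreme points. The proof is
by strong induction on the dimension of the space `V(q)` of directions in which one may move a
little both ways from `q` inside the set. If `V(q) = 0`, then `q` is extreme. Otherwise, moving from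
`q` along some `v ∈ V(q)` as far as possible both ways writes `q` as a point of a segment whose
endpoints `q'` satisfy `V(q') < V(q)`.
-/

section Minkowski

variable {E : Type*} [NormedAddCommGroup E] [NormedSpace ℝ E]

/-- The space of directions `v` such that `q + t • v` remains in the convex set `s` for all
sufficiently small `t` of either sign. -/
def twoSidedDirections {s : Set E} (hs : Convex ℝ s) {q : E} (hq : q ∈ s) : Submodule ℝ E where
  carrier := {v | ∃ ε > 0, ∀ t : ℝ, |t| ≤ ε → q + t • v ∈ s}
  zero_mem' := ⟨1, one_pos, fun t _ => by simpa using hq⟩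
  add_mem' := by
    rintro v w ⟨ε, hε, hv⟩ ⟨δ, hδ, hw⟩
    refine ⟨min ε δ / 2, by positivity, fun t ht => ?_⟩
    have h2 : |2 * t| ≤ min ε δ := by rw [abs_mul, abs_two]; linarith
    -- `q + t • (v + w)` is the midpoint of `q + (2 * t) • v` and `q + (2 * t) • w`.
    have := hs (hv (2 * t) (h2.trans (min_le_left _ _))) (hw (2 * t) (h2.trans (min_le_right _ _)))
      (by norm_num : (0 : ℝ) ≤ 1 / 2) (by norm_num : (0 : ℝ) ≤ 1 / 2) (by norm_num)
    convert this using 1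
    module
  smul_mem' := by
    rintro c v ⟨ε, hε, hv⟩
    refine ⟨ε / (|c| + 1), by positivity, fun t ht => ?_⟩
    rw [smul_smul]
    apply hv
    rw [le_div_iff₀ (by positivity)] at ht
    rw [abs_mul]
    nlinarith [abs_nonneg t, abs_nonneg c]

lemma mem_extremePoints_of_twoSidedDirections_eq_bot {s : Set E} (hs : Convex ℝ s) {q : E}
    (hq : q ∈ s) (h : twoSidedDirections hs hq = ⊥) : q ∈ s.extremePoints ℝ := by
  rw [mem_extremePoints_iff_left]
  refine ⟨hq, ?_⟩
  rintro x₁ hx₁ x₂ hx₂ ⟨a, b, ha, hb, hab, hqe⟩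
  have hmem : x₁ - q ∈ twoSidedDirections hs hq := by
    refine ⟨min 1 (a / b), by positivity, fun t ht => ?_⟩
    have ht1 : |t| ≤ 1 := ht.trans (min_le_left _ _)
    have ht2 : |t| ≤ a / b := ht.trans (min_le_right _ _)
    rcases le_total 0 t with h0 | h0
    · rw [abs_of_nonneg h0] at ht1
      convert hs hq hx₁ (sub_nonneg.2 ht1) h0 (by ring) using 1
      module
    · rw [abs_of_nonpos h0, le_div_iff₀ hb] at ht2
      -- Moving backwards from `x₁` means moving towards `x₂`, as `a • (x₁ - q) = -b • (x₂ - q)`.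
      have hu : 0 ≤ -t * b / a := by
        have : 0 ≤ -t := by linarith
        positivity
      have hu1 : -t * b / a ≤ 1 := by rwa [div_le_one ha]
      convert hs hq hx₂ (sub_nonneg.2 hu1) hu (by ring) using 1
      have hx : x₁ - q = (-b / a) • (x₂ - q) := by
        have : a • (x₁ - q) = (-b) • (x₂ - q) := by
          have hb' : b = 1 - a := by linarith
          subst hb'
          rw [← hqe]
          module
        rw [div_eq_inv_mul, mul_smul, ← this, smul_smul, inv_mul_cancel₀ ha.ne', one_smul]
      rw [hx]
      module
  rw [h, Submodule.mem_bot, sub_eq_zero] at hmem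
  exact hmem

lemma twoSidedDirections_le {s : Set E} (hs : Convex ℝ s) {q q₁ q₂ : E} (hq : q ∈ s)
    (hq₁ : q₁ ∈ s) (hq₂ : q₂ ∈ s) (h : q ∈ openSegment ℝ q₁ q₂) :
    twoSidedDirections hs hq₁ ≤ twoSidedDirections hs hq := by
  obtain ⟨a, b, ha, hb, hab, rfl⟩ := h
  rintro v ⟨ε, hε, hv⟩
  refine ⟨a * ε, by positivity, fun t ht => ?_⟩
  have h1 : |t / a| ≤ ε := by
    rw [abs_div, abs_of_pos ha, div_le_iff₀ ha]
    linarith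
  convert hs (hv _ h1) hq₂ ha.le hb.le hab using 1
  rw [smul_add, smul_smul, mul_div_cancel₀ _ ha.ne']
  abel

/-- From a point of a compact set one can move a maximal distance in a nonzero direction. -/
lemma exists_maximal_step {s : Set E} (hc : IsCompact s) {q v : E} (hq : q ∈ s) (hv : v ≠ 0) :
    ∃ t : ℝ, q + t • v ∈ s ∧ ∀ u : ℝ, q + u • v ∈ s → u ≤ t := by
  have hemb : Topology.IsClosedEmbedding (fun t : ℝ => q + t • v) :=
    (Homeomorph.addLeft q).isClosedEmbedding.comp (isClosedEmbedding_smul_left hv)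
  obtain ⟨t, ht, hmax⟩ := (hemb.isCompact_preimage hc).exists_isGreatest ⟨0, by simpa using hq⟩
  exact ⟨t, ht, fun u hu => hmax hu⟩

/-- An endpoint of a maximal chord through `q` has strictly fewer two-sided directions than `q`:
the direction of the chord is lost. -/
lemma twoSidedDirections_lt {s : Set E} (hs : Convex ℝ s) {q v : E} (hq : q ∈ s)
    (hv : v ∈ twoSidedDirections hs hq) {t u : ℝ} (hu : 0 < u) (ht : 0 < t)
    (hts : q + t • v ∈ s) (hus : q - u • v ∈ s) (hmax : ∀ t' : ℝ, q + t' • v ∈ s → t' ≤ t) :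
    twoSidedDirections hs hts < twoSidedDirections hs hq := by
  refine lt_of_le_of_ne (twoSidedDirections_le hs hq hts hus ?_) fun heq => ?_
  · refine ⟨u / (t + u), t / (t + u), by positivity, by positivity, by field_simp; ring, ?_⟩
    have h1 : (u / (t + u)) + t / (t + u) = 1 := by field_simp; ring
    calc (u / (t + u)) • (q + t • v) + (t / (t + u)) • (q - u • v)
        = (u / (t + u) + t / (t + u)) • q := by module
      _ = q := by rw [h1, one_smul]
  · rw [← heq] at hv
    obtain ⟨ε, hε, h⟩ := hv
    have := hmax (t + ε) (by
      have := h ε (abs_of_pos hε).le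
      rwa [add_assoc, ← add_smul] at this)
    linarith

/-- **Minkowski's theorem**: in finite dimension, every point of a compact convex set is a convex
combination of extreme points of that set. -/
theorem mem_convexHull_extremePoints [FiniteDimensional ℝ E] {s : Set E} (hs : Convex ℝ s)
    (hc : IsCompact s) {q : E} (hq : q ∈ s) : q ∈ convexHull ℝ (s.extremePoints ℝ) := by
  induction hn : Module.finrank ℝ (twoSidedDirections hs hq) using Nat.strong_induction_on
    generalizing q with
  | _ n ih =>
    subst hn
    by_cases hbot : twoSidedDirections hs hq = ⊥
    · exact subset_convexHull ℝ _ (mem_extremePoints_of_twoSidedDirections_eq_bot hs hq hbot)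
    · obtain ⟨v, hv, hv0⟩ := Submodule.exists_mem_ne_zero_of_ne_bot hbot
      obtain ⟨t, hts, htmax⟩ := exists_maximal_step hc hq hv0
      obtain ⟨u, hus, humax⟩ := exists_maximal_step hc hq (neg_ne_zero.2 hv0)
      obtain ⟨ε, hε, h⟩ := id hv
      have ht : 0 < t := hε.trans_le (htmax ε (h ε (abs_of_pos hε).le))
      have hu : 0 < u := hε.trans_le <| humax ε <| by
        have := h (-ε) (by rw [abs_neg, abs_of_pos hε])
        rwa [smul_neg, ← neg_smul]
      have h1 := ih _ (Submodule.finrank_lt_finrank_of_lt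
        (twoSidedDirections_lt hs hq hv hu ht hts (by simpa [sub_eq_add_neg] using hus) htmax))
        hts rfl
      have h2 := ih _ (Submodule.finrank_lt_finrank_of_lt
        (twoSidedDirections_lt hs hq (neg_mem hv) ht hu hus (by simpa using hts) humax)) hus rfl
      have hcomb := convex_convexHull ℝ (s.extremePoints ℝ) h1 h2
        (a := u / (t + u)) (b := t / (t + u)) (by positivity) (by positivity)
        (by field_simp; ring)
      have h1 : (u / (t + u)) + t / (t + u) = 1 := by field_simp; ring
      convert hcomb using 1
      calc q = (u / (t + u) + t / (t + u)) • q := by rw [h1, one_smul]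
        _ = _ := by module

end Minkowski

section Splitting

variable {E P : Type*} [NormedAddCommGroup E] [NormedSpace ℝ E] [FiniteDimensional ℝ E]

/-- A point `q ∈ Q p`, placed on path `p`, is represented by a finite weighting of the extreme
points of `Q p` that integrates every function affine in `q` to its value at `(p, q)`. -/
lemma exists_extreme_weighting {Q : P → Set E} (hQcomp : ∀ p, IsCompact (Q p))
    (hQconv : ∀ p, Convex ℝ (Q p)) (pq : P × E) (hq : pq.2 ∈ Q pq.1) :
    ∃ y : (P × E) →₀ ℝ, (∀ a, 0 ≤ y a) ∧
      (∀ a ∈ y.support, a.2 ∈ (Q a.1).extremePoints ℝ) ∧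
      ∀ (c : P → ℝ) (L : E →ₗ[ℝ] ℝ),
        Finsupp.linearCombination ℝ (fun a : P × E => c a.1 + L a.2) y = c pq.1 + L pq.2 := by
  classical
  obtain ⟨p, q⟩ := pq
  have hmem := mem_convexHull_extremePoints (hQconv p) (hQcomp p) hq
  rw [convexHull_eq] at hmem
  obtain ⟨ι, t, w, z, hw, hw1, hz, hcm⟩ := hmem
  rw [Finset.centerMass_eq_of_sum_1 _ _ hw1] at hcm
  refine ⟨∑ i ∈ t, Finsupp.single (p, z i) (w i), fun a => ?_, fun a ha => ?_, fun c L => ?_⟩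
  · rw [Finsupp.finsetSum_apply]
    refine Finset.sum_nonneg fun i hi => ?_
    rw [Finsupp.single_apply]
    split_ifs
    exacts [hw i hi, le_rfl]
  · obtain ⟨i, hi, hai⟩ := Finset.mem_biUnion.1 (Finsupp.support_finsetSum ha)
    have := Finset.mem_singleton.1 (Finsupp.support_single_subset hai)
    subst this
    exact hz i hi
  · dsimp only at hcm ⊢
    simp only [map_sum, Finsupp.linearCombination_single, smul_eq_mul, mul_add,
      Finset.sum_add_distrib, ← Finset.sum_mul, hw1, one_mul]
    rw [← hcm]
    simp

/-- Any flow can be replaced by one supported on extreme points without changing the weighted sum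
of any function affine in the charging vector. -/
lemma exists_extreme_flow {Q : P → Set E} (hQcomp : ∀ p, IsCompact (Q p))
    (hQconv : ∀ p, Convex ℝ (Q p)) (x : (P × E) →₀ ℝ) (hx : ∀ a, 0 ≤ x a)
    (hxQ : ∀ a ∈ x.support, a.2 ∈ Q a.1) :
    ∃ x' : (P × E) →₀ ℝ, (∀ a, 0 ≤ x' a) ∧
      (∀ a ∈ x'.support, a.2 ∈ (Q a.1).extremePoints ℝ) ∧
      ∀ (c : P → ℝ) (L : E →ₗ[ℝ] ℝ),
        (x'.sum fun a w => w * (c a.1 + L a.2)) = x.sum fun a w => w * (c a.1 + L a.2) := by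
  classical
  choose! Y hY0 hYext hYval using exists_extreme_weighting hQcomp hQconv
  refine ⟨∑ a ∈ x.support, x a • Y a, fun b => ?_, fun b hb => ?_, fun c L => ?_⟩
  · rw [Finsupp.finsetSum_apply]
    exact Finset.sum_nonneg fun a ha => mul_nonneg (hx a) (hY0 a (hxQ a ha) b)
  · obtain ⟨a, ha, hab⟩ := Finset.mem_biUnion.1 (Finsupp.support_finsetSum hb)
    exact hYext a (hxQ a ha) b (Finsupp.support_smul hab)
  · have key : Finsupp.linearCombination ℝ (fun a : P × E => c a.1 + L a.2)
        (∑ a ∈ x.support, x a • Y a) =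
        Finsupp.linearCombination ℝ (fun a : P × E => c a.1 + L a.2) x := by
      rw [map_sum, Finsupp.linearCombination_apply, Finsupp.sum]
      refine Finset.sum_congr rfl fun a ha => ?_
      rw [map_smul, hYval a (hxQ a ha)]
    simpa only [Finsupp.linearCombination_apply, smul_eq_mul] using key

end Splitting


theorem minCostFlow_extremePoint_reduction
    (I J P K : Type) [Fintype I] [Fintype J] [Fintype P] [Fintype K] [DecidableEq K]
    (r : I × J → ℝ) (hr : ∀ ij, 0 < r ij)
    (a : I → ℝ) (ha : ∀ i, 0 ≤ a i)
    (Q : P → Set (I × J → ℝ))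
    (hQne : ∀ p, (Q p).Nonempty)
    (hQcomp : ∀ p, IsCompact (Q p))
    (hQconv : ∀ p, Convex ℝ (Q p))
    (hQnonneg : ∀ p, ∀ q ∈ Q p, ∀ ij, 0 ≤ q ij)
    (cls : P → K) (D : K → ℝ) (hD : ∀ k, 0 ≤ D k)
    (ℓ : P → ℝ) (hℓ : ∀ p, 0 ≤ ℓ p)
    (γ : I × J → ℝ) (hγ : ∀ ij, 0 ≤ γ ij) :
    sInf {v : ℝ | ∃ (x : (P × (I × J → ℝ)) →₀ ℝ) (z : I × J → ℝ),
        (∀ pq, 0 ≤ x pq) ∧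
        (∀ pq ∈ x.support, pq.2 ∈ Q pq.1) ∧
        (∀ ij, 0 ≤ z ij) ∧
        (∀ ij, (x.sum fun pq w => w * pq.2 ij) ≤ r ij * z ij) ∧
        (∀ i, ∑ j, z (i, j) = a i) ∧
        (∀ k, D k ≤ x.sum fun pq w => if cls pq.1 = k then w else 0) ∧
        v = x.sum fun pq w => w * (ℓ pq.1 + ∑ ij, γ ij * pq.2 ij)} =
    sInf {v : ℝ | ∃ (x : (P × (I × J → ℝ)) →₀ ℝ) (z : I × J → ℝ),
        (∀ pq, 0 ≤ x pq) ∧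
        (∀ pq ∈ x.support, pq.2 ∈ Q pq.1) ∧
        (∀ pq ∈ x.support, pq.2 ∈ Set.extremePoints ℝ (Q pq.1)) ∧
        (∀ ij, 0 ≤ z ij) ∧
        (∀ ij, (x.sum fun pq w => w * pq.2 ij) ≤ r ij * z ij) ∧
        (∀ i, ∑ j, z (i, j) = a i) ∧
        (∀ k, D k ≤ x.sum fun pq w => if cls pq.1 = k then w else 0) ∧
        v = x.sum fun pq w => w * (ℓ pq.1 + ∑ ij, γ ij * pq.2 ij)} := by
  congr 1
  ext v
  constructor
  · rintro ⟨x, z, hx, hxQ, hz, hcap, hza, hdem, rfl⟩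
    obtain ⟨x', hx', hext, hval⟩ := exists_extreme_flow hQcomp hQconv x hx hxQ
    refine ⟨x', z, hx', fun a ha => extremePoints_subset (hext a ha), hext, hz, fun ij => ?_, hza,
      fun k => ?_, ?_⟩
    · have := hval 0 (LinearMap.proj ij)
      simp only [Pi.zero_apply, zero_add, LinearMap.proj_apply] at this
      exact this.trans_le (hcap ij)
    · have := hval (fun p => if cls p = k then 1 else 0) 0
      simp only [LinearMap.zero_apply, add_zero, mul_ite, mul_one, mul_zero] at this
      exact (hdem k).trans_eq this.symm
    · have := hval ℓ (∑ ij, γ ij • LinearMap.proj ij)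
      simp only [LinearMap.sum_apply, LinearMap.smul_apply, LinearMap.proj_apply,
        smul_eq_mul] at this
      exact this.symm
  · rintro ⟨x, z, hx, hxQ, -, h⟩
    exact ⟨x, z, hx, hxQ, h⟩
end

section
/- There exists a flow x with value ∑_S x(S) ≥ 2 if and only if there exists a subset B ⊆ {1,…,n} with ∑_{i∈B} z_i = L. (This is the correctness of the reduction from PARTITION that shows NP-hardness of the maximum EV flow problem with edge capacities.) -/
/-!
If `B` sums to `L`, then so does its complement, and sending one unit along each of `B` and `Bᶜ`
uses every arc exactly once.

Conversely, the two arcs of any gadget together carry at most `2`, so a flow of value at least `2`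
has value exactly `2` and saturates every top arc. Counting the `z`-weight of the flow by gadgets
gives `∑ S, x S * z(S) = ∑ i, z i = 2 * L`. If no set summed to `L`, every set carrying flow would
have weight at most `L - 1`, so this weighted sum would be at most `2 * (L - 1)`, a contradiction.
-/

theorem partition_reduction_correct
    (n L : ℕ) (hn : 1 ≤ n) (z : Fin n → ℕ) (hz : ∑ i, z i = 2 * L) :
    (∃ x : Finset (Fin n) → ℝ,
      (∀ S, 0 ≤ x S) ∧
      (∀ S, 0 < x S → ∑ i ∈ S, z i ≤ L) ∧
      (∀ i : Fin n,
        ∑ S ∈ Finset.univ.filter (fun S : Finset (Fin n) => i ∈ S), x S ≤ 1) ∧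
      (∀ i : Fin n,
        ∑ S ∈ Finset.univ.filter (fun S : Finset (Fin n) => i ∉ S), x S ≤ 1) ∧
      2 ≤ ∑ S : Finset (Fin n), x S) ↔
    (∃ B : Finset (Fin n), ∑ i ∈ B, z i = L) := by
  constructor
  · rintro ⟨x, hx0, hxL, hin, hout, hval⟩
    by_contra! hB
    have hsplit (i : Fin n) := Finset.sum_filter_add_sum_filter_not
      (Finset.univ : Finset (Finset (Fin n))) (fun S => i ∈ S) x
    have htop (i : Fin n) : 1 ≤ ∑ S with i ∈ S, x S := by
      linarith [hsplit i, hout i]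
    have hT : ∑ S, x S = 2 := by
      linarith [hsplit ⟨0, hn⟩, hin ⟨0, hn⟩, hout ⟨0, hn⟩]
    -- The slack is written as `z(S) + 1 ≤ L`, which avoids subtraction when `L = 0`.
    have hupper : ∑ S, x S * ((∑ i ∈ S, (z i : ℝ)) + 1) ≤ ∑ S, x S * L := by
      refine Finset.sum_le_sum fun S _ => ?_
      rcases (hx0 S).eq_or_lt with h | h
      · simp [← h]
      · have h1 : (∑ i ∈ S, z i) + 1 ≤ L := lt_of_le_of_ne (hxL S h) (hB S)
        exact mul_le_mul_of_nonneg_left (by exact_mod_cast h1) h.le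
    have hswap : ∑ S, x S * (∑ i ∈ S, (z i : ℝ)) = ∑ i, (z i : ℝ) * ∑ S with i ∈ S, x S := by
      simp_rw [Finset.mul_sum]
      rw [Finset.sum_comm' (t' := Finset.univ) (s' := fun i => {S | i ∈ S}) (by simp)]
      simp_rw [mul_comm]
    have hlower : ∑ i, (z i : ℝ) ≤ ∑ i, (z i : ℝ) * ∑ S with i ∈ S, x S :=
      Finset.sum_le_sum fun i _ => le_mul_of_one_le_right (Nat.cast_nonneg _) (htop i)
    have hz' : ∑ i, (z i : ℝ) = 2 * L := by exact_mod_cast hz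
    simp_rw [mul_add, mul_one] at hupper
    rw [Finset.sum_add_distrib, ← Finset.sum_mul, hT, hswap] at hupper
    linarith
  · rintro ⟨B, hB⟩
    have hBc : ∑ i ∈ Bᶜ, z i = L := by
      have := Finset.sum_add_sum_compl B z
      omega
    -- A sum of two indicators, so that no case distinction on `B = Bᶜ` is needed.
    refine ⟨fun S => (if S = B then 1 else 0) + (if S = Bᶜ then 1 else 0), ?_, ?_, ?_, ?_, ?_⟩
    · intro S
      positivity
    · intro S hS
      by_cases h1 : S = B
      · rw [h1, hB]
      by_cases h2 : S = Bᶜ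
      · rw [h2, hBc]
      simp [h1, h2] at hS
    · intro i
      by_cases hi : i ∈ B <;> simp [Finset.sum_add_distrib, Finset.sum_ite_eq', hi]
    · intro i
      by_cases hi : i ∈ B <;> simp [Finset.sum_add_distrib, Finset.sum_ite_eq', hi]
    · simp only [Finset.sum_add_distrib, Finset.sum_ite_eq', Finset.mem_univ, if_true]
      norm_num
end

section
/- If x is a flow with value ∑_S x(S) ≥ 2, then the value of x is exactly 2, for every i ∈ {1,…,n} both ∑_{S : i∈S} x(S) = 1 and ∑_{S : i∉S} x(S) = 1, and every subset S with x(S) > 0 satisfies ∑_{i∈S} z_i = L exactly. (Averaging argument: the weighted average path length equals ∑_i z_i = 2L over total mass 2, while every supported path has length at most L, forcing all supported path lengths to equal L.) -/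
/-!
For each gadget the two arc loads add up to the value of the flow. Each load is at most 1 and the
value is at least 2, so both loads equal 1 and the value is 2. Exchanging the order of summation,
the total length weighted by `x` is then `∑ i, z i = 2 * L`, which is also `L` times the total mass.
Hence the slacks `x S * (L - ∑ i ∈ S, z i)`, which are nonnegative by feasibility, sum to zero, so
each of them vanishes and every supported `S` has length exactly `L`.
-/

theorem flow_value_two_forces_tightness
    (n L : ℕ) (hn : 1 ≤ n) (z : Fin n → ℕ) (hz : ∑ i, z i = 2 * L)
    (x : Finset (Fin n) → ℝ)
    (hx0 : ∀ S, 0 ≤ x S)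
    (hfeas : ∀ S, 0 < x S → ∑ i ∈ S, z i ≤ L)
    (hcap1 : ∀ i : Fin n,
      ∑ S ∈ Finset.univ.filter (fun S : Finset (Fin n) => i ∈ S), x S ≤ 1)
    (hcap2 : ∀ i : Fin n,
      ∑ S ∈ Finset.univ.filter (fun S : Finset (Fin n) => i ∉ S), x S ≤ 1)
    (hval : 2 ≤ ∑ S : Finset (Fin n), x S) :
    (∑ S : Finset (Fin n), x S = 2) ∧
    (∀ i : Fin n,
      ∑ S ∈ Finset.univ.filter (fun S : Finset (Fin n) => i ∈ S), x S = 1) ∧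
    (∀ i : Fin n,
      ∑ S ∈ Finset.univ.filter (fun S : Finset (Fin n) => i ∉ S), x S = 1) ∧
    (∀ S : Finset (Fin n), 0 < x S → ∑ i ∈ S, z i = L) := by
  have hsplit : ∀ i : Fin n,
      ∑ S ∈ Finset.univ.filter (fun S : Finset (Fin n) => i ∈ S), x S +
        ∑ S ∈ Finset.univ.filter (fun S : Finset (Fin n) => i ∉ S), x S = ∑ S, x S :=
    fun i => Finset.sum_filter_add_sum_filter_not _ _ _
  have h1 : ∀ i : Fin n,
      ∑ S ∈ Finset.univ.filter (fun S : Finset (Fin n) => i ∈ S), x S = 1 := by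
    intro i
    linarith [hsplit i, hcap1 i, hcap2 i]
  have h2 : ∀ i : Fin n,
      ∑ S ∈ Finset.univ.filter (fun S : Finset (Fin n) => i ∉ S), x S = 1 := by
    intro i
    linarith [hsplit i, hcap1 i, hcap2 i]
  -- Some gadget exists because `1 ≤ n`; without one the value would be unbounded.
  have htot : ∑ S : Finset (Fin n), x S = 2 := by
    linarith [hsplit ⟨0, hn⟩, h1 ⟨0, hn⟩, h2 ⟨0, hn⟩]
  refine ⟨htot, h1, h2, ?_⟩
  -- Double counting: the mass-weighted total length is `∑ i, z i`, as each top arc carries mass 1.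
  have hlen : ∑ S : Finset (Fin n), x S * ∑ i ∈ S, (z i : ℝ) = 2 * L := by
    calc ∑ S : Finset (Fin n), x S * ∑ i ∈ S, (z i : ℝ)
        = ∑ S : Finset (Fin n), ∑ i, if i ∈ S then x S * (z i : ℝ) else 0 := by
          refine Finset.sum_congr rfl fun S _ => ?_
          rw [Finset.mul_sum, Finset.sum_ite_mem, Finset.univ_inter]
      _ = ∑ i, (∑ S ∈ Finset.univ.filter (fun S : Finset (Fin n) => i ∈ S), x S) * (z i : ℝ) := by
          rw [Finset.sum_comm]
          refine Finset.sum_congr rfl fun i _ => ?_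
          rw [Finset.sum_mul, Finset.sum_filter]
      _ = ∑ i, (z i : ℝ) := by simp only [h1, one_mul]
      _ = 2 * L := by exact_mod_cast hz
  have hslack_nonneg : ∀ S ∈ (Finset.univ : Finset (Finset (Fin n))),
      0 ≤ x S * ((L : ℝ) - ∑ i ∈ S, (z i : ℝ)) := by
    intro S _
    rcases (hx0 S).eq_or_lt with h | h
    · simp [← h]
    · have hle : ∑ i ∈ S, (z i : ℝ) ≤ L := by exact_mod_cast hfeas S h
      exact mul_nonneg h.le (sub_nonneg.mpr hle)
  have hslack_sum : ∑ S : Finset (Fin n), x S * ((L : ℝ) - ∑ i ∈ S, (z i : ℝ)) = 0 := by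
    simp only [mul_sub, Finset.sum_sub_distrib, ← Finset.sum_mul, htot, hlen, sub_self]
  intro S hS
  have hzero := (Finset.sum_eq_zero_iff_of_nonneg hslack_nonneg).mp hslack_sum S (Finset.mem_univ S)
  have hlenS : ∑ i ∈ S, (z i : ℝ) = L :=
    (sub_eq_zero.mp ((mul_eq_zero.mp hzero).resolve_left hS.ne')).symm
  exact_mod_cast hlenS
end
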